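/- Every mechanism on tie-free profiles that is ordinal, neutral, anonymous and truthful is a convex combination of the mechanisms J^{1,q}_U for q ∈ {1,...,m} together with the mechanisms J^{2,q}_U for q ∈ {⌊n/2⌋+1,...,n+1}. -/

import Mathlib

open Finset

/-- A normalized preference function: maps into `[0,1]` and attains both `0` and `1`. -/
def IsPref {m : ℕ} (u : Fin m → ℝ) : Prop :=
  (∀ j, 0 ≤ u j ∧ u j ≤ 1) ∧ (∃ j, u j = 0) ∧ (∃ j, u j = 1)

/-- A tie-free normalized preference function. -/
def IsPrefU {m : ℕ} (u : Fin m → ℝ) : Prop :=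
  IsPref u ∧ Function.Injective u

/-- A profile of normalized preference functions. -/
def IsProfile {n m : ℕ} (u : Fin n → Fin m → ℝ) : Prop :=
  ∀ i, IsPref (u i)

/-- A tie-free profile. -/
def IsProfileU {n m : ℕ} (u : Fin n → Fin m → ℝ) : Prop :=
  ∀ i, IsPrefU (u i)

/-- `p` is a probability distribution over the `m` candidates. -/
def IsDist {m : ℕ} (p : Fin m → ℝ) : Prop :=
  (∀ j, 0 ≤ p j) ∧ ∑ j, p j = 1

/-- Social welfare of candidate `j` under profile `u`. -/
def Wel {n m : ℕ} (j : Fin m) (u : Fin n → Fin m → ℝ) : ℝ :=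
  ∑ i, u i j

/-- Range voting: the candidate of maximal social welfare, ties broken
toward the smaller index. -/
noncomputable def RV {n m : ℕ} (hm : 0 < m) (u : Fin n → Fin m → ℝ) : Fin m :=
  (Finset.univ.filter fun j => ∀ j', Wel j' u ≤ Wel j u).min' (by
    obtain ⟨j, -, hj⟩ := Finset.exists_max_image (Finset.univ : Finset (Fin m))
      (fun j => Wel j u) ⟨⟨0, hm⟩, Finset.mem_univ _⟩
    exact ⟨j, Finset.mem_filter.2 ⟨Finset.mem_univ _, fun j' => hj j' (Finset.mem_univ _)⟩⟩)

/-- Expected social welfare of a randomized mechanism `J` (given as the map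
sending a profile to the probability of each candidate winning). -/
noncomputable def expWel {n m : ℕ} (J : (Fin n → Fin m → ℝ) → Fin m → ℝ)
    (u : Fin n → Fin m → ℝ) : ℝ :=
  ∑ j, J u j * Wel j u

/-- Rank of candidate `j` in preference `v`, ties broken in favor of the
smaller candidate index (the most preferred candidate has rank 1). -/
noncomputable def rnk {m : ℕ} (v : Fin m → ℝ) (j : Fin m) : ℕ :=
  (Finset.univ.filter fun j' => v j < v j' ∨ (v j' = v j ∧ j' ≤ j)).card

/-- The mechanism `J^{1,q}`: pick a voter uniformly at random, then a winner
uniformly at random among that voter's `q` most preferred candidates. -/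
noncomputable def Jone (q : ℕ) {n m : ℕ} (u : Fin n → Fin m → ℝ) : Fin m → ℝ :=
  fun j => (∑ i : Fin n, if rnk (u i) j ≤ q then ((q : ℝ))⁻¹ else 0) / (n : ℝ)

/-- `⌊m^{1/3}⌋`. -/
noncomputable def mroot3 (m : ℕ) : ℕ := ⌊(m : ℝ) ^ ((1 : ℝ)/3)⌋₊

/-- The mechanism `J*`, running `J^{1,1}` and `J^{1,⌊m^{1/3}⌋}` each with
probability `1/2`. -/
noncomputable def Jstar {n m : ℕ} (u : Fin n → Fin m → ℝ) : Fin m → ℝ :=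
  fun j => (Jone 1 u j + Jone (mroot3 m) u j) / 2

/-- Voter with preference `v` prefers `j₀` to `j₁` (ties toward the smaller
candidate index). -/
def Prefers {m : ℕ} (v : Fin m → ℝ) (j₀ j₁ : Fin m) : Prop :=
  v j₁ < v j₀ ∨ (v j₀ = v j₁ ∧ j₀ < j₁)

noncomputable instance {m : ℕ} (v : Fin m → ℝ) (j₀ j₁ : Fin m) :
    Decidable (Prefers v j₀ j₁) := by unfold Prefers; infer_instance

/-- The mechanism `J^{2,q}`: pick two distinct candidates uniformly at random,
let each voter vote for the one it prefers; if one of the two gets at least `q`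
votes it wins, otherwise the winner is one of the two by a fair coin. -/
noncomputable def Jtwo (q : ℕ) {n m : ℕ} (u : Fin n → Fin m → ℝ) : Fin m → ℝ :=
  fun j =>
    (∑ j₀ : Fin m, ∑ j₁ : Fin m,
      if j₀ = j₁ then 0
      else
        if q ≤ (Finset.univ.filter fun i => Prefers (u i) j₀ j₁).card then
          (if j = j₀ then (1 : ℝ) else 0)
        else if q ≤ n - (Finset.univ.filter fun i => Prefers (u i) j₀ j₁).card then
          (if j = j₁ then (1 : ℝ) else 0)
        else ((if j = j₀ then (1 : ℝ)/2 else 0) + (if j = j₁ then (1 : ℝ)/2 else 0)))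
      / ((m * (m - 1) : ℕ) : ℝ)

/-- `J` assigns a probability distribution to every tie-free profile. -/
def MechU {n m : ℕ} (J : (Fin n → Fin m → ℝ) → Fin m → ℝ) : Prop :=
  ∀ u, IsProfileU u → IsDist (J u)

/-- Truthfulness (on tie-free profiles). -/
def Truthful {n m : ℕ} (J : (Fin n → Fin m → ℝ) → Fin m → ℝ) : Prop :=
  ∀ u, IsProfileU u → ∀ (i : Fin n) (v : Fin m → ℝ), IsPrefU v →
    ∑ j, J (Function.update u i v) j * u i j ≤ ∑ j, J u j * u i j

/-- Ordinality (on tie-free profiles). -/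
def OrdinalMech {n m : ℕ} (J : (Fin n → Fin m → ℝ) → Fin m → ℝ) : Prop :=
  ∀ u u' : Fin n → Fin m → ℝ, IsProfileU u → IsProfileU u' →
    (∀ i (j j' : Fin m), u i j < u i j' ↔ u' i j < u' i j') → J u = J u'

/-- Unilateral mechanism (on tie-free profiles): depends only on one voter. -/
def Unilateral {n m : ℕ} (J : (Fin n → Fin m → ℝ) → Fin m → ℝ) : Prop :=
  ∃ i : Fin n, ∀ u u' : Fin n → Fin m → ℝ, IsProfileU u → IsProfileU u' →
    u i = u' i → J u = J u'

/-- Duple mechanism (on tie-free profiles): supported on two fixed candidates. -/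
def Duple {n m : ℕ} (J : (Fin n → Fin m → ℝ) → Fin m → ℝ) : Prop :=
  ∃ j₀ j₁ : Fin m, j₀ ≠ j₁ ∧ ∀ u, IsProfileU u → ∀ j, j ≠ j₀ → j ≠ j₁ → J u j = 0

/-- Neutral mechanism (on tie-free profiles). -/
def Neutral {n m : ℕ} (J : (Fin n → Fin m → ℝ) → Fin m → ℝ) : Prop :=
  ∀ τ : Equiv.Perm (Fin m), ∀ u : Fin n → Fin m → ℝ, IsProfileU u →
    ∀ j, J (fun i => u i ∘ τ) j = J u (τ j)

/-- Anonymous mechanism (on tie-free profiles). -/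
def AnonymousMech {n m : ℕ} (J : (Fin n → Fin m → ℝ) → Fin m → ℝ) : Prop :=
  ∀ σ : Equiv.Perm (Fin n), ∀ u : Fin n → Fin m → ℝ, IsProfileU u →
    J (fun i => u (σ i)) = J u

/-- `ratio_U(J)`: infimum of the welfare ratio over tie-free profiles. -/
noncomputable def ratioU {n m : ℕ} (hm : 0 < m)
    (J : (Fin n → Fin m → ℝ) → Fin m → ℝ) : ℝ :=
  sInf {r | ∃ u, IsProfileU u ∧ r = expWel J u / Wel (RV hm u) u}

/-- `R_k`: tie-free normalized preferences taking values in `{0,1/k,…,1}`. -/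
def Rk {m : ℕ} (k : ℕ) (u : Fin m → ℝ) : Prop :=
  IsPrefU u ∧ ∀ j, ∃ t : ℕ, t ≤ k ∧ u j = (t : ℝ) / k

/-- `a(u)`: the number of `t ∈ {0,…,k-1}` such that exactly one of `t/k` and
`(t+1)/k` lies in the image of `u`. -/
noncomputable def aOf {m : ℕ} (k : ℕ) (u : Fin m → ℝ) : ℕ :=
  ((Finset.range k).filter fun t : ℕ =>
    ((∃ j : Fin m, u j = (t : ℝ) / k) ∧ ¬ (∃ j : Fin m, u j = ((t : ℝ) + 1) / k)) ∨
    ((∃ j : Fin m, u j = ((t : ℝ) + 1) / k) ∧ ¬ (∃ j : Fin m, u j = (t : ℝ) / k))).card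

/-- `C_k = {u ∈ R_k : a(u) = 2}`. -/
def Ck {m : ℕ} (k : ℕ) (u : Fin m → ℝ) : Prop :=
  Rk k u ∧ aOf k u = 2

/-- `count(u)`: the number of candidates with `u`-value above `1/2`. -/
noncomputable def countOf {m : ℕ} (u : Fin m → ℝ) : ℕ :=
  (Finset.univ.filter fun j => (1 : ℝ)/2 < u j).card

/-- `rank(u,j) = #{j' : u(j') ≥ u(j)}`. -/
noncomputable def rankOf {m : ℕ} (u : Fin m → ℝ) (j : Fin m) : ℕ :=
  (Finset.univ.filter fun j' => u j ≤ u j').card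

/-- `D_k = D_k^{(a)} ∪ D_k^{(b)} ∪ D_k^{(c)}` (`⟨0,hm⟩` is the first candidate). -/
def Dk {m : ℕ} (hm : 0 < m) (k : ℕ) (u : Fin m → ℝ) : Prop :=
  Ck k u ∧
    ((countOf u ≤ 2 ∧ (1 : ℝ)/2 < u ⟨0, hm⟩) ∨
     (countOf u = 1 ∧ mroot3 m < rankOf u ⟨0, hm⟩) ∨
     (countOf u = mroot3 m + 1 ∧ rankOf u ⟨0, hm⟩ = mroot3 m + 1))

/-- `g(u) = E[Wel(J*(u),u)] / Wel(1,u)` where `1` is the first candidate. -/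
noncomputable def gfun {n m : ℕ} (hm : 0 < m) (u : Fin n → Fin m → ℝ) : ℝ :=
  expWel Jstar u / Wel ⟨0, hm⟩ u

/-- The minimum (as an infimum) of `f` over profiles all of whose preference
functions satisfy `P`. -/
noncomputable def minOver {n m : ℕ} (P : (Fin m → ℝ) → Prop)
    (f : (Fin n → Fin m → ℝ) → ℝ) : ℝ :=
  sInf {r | ∃ u : Fin n → Fin m → ℝ, (∀ i, P (u i)) ∧ r = f u}

/-!
Truthfulness on tie-free utilities amounts to Gibbard's swap conditions: a voter who swaps two
adjacent candidates can only move probability from the demoted candidate to the promoted one. The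
amount moved ignores how the other voters rank any other pair, so by neutrality and anonymity it is
a function `D r s` of the position `r` of the demoted candidate and the number `s` of voters ranking
it above the promoted one. Reversing three consecutive candidates by adjacent swaps in the two
possible orders gives `D r s + D (r + 1) t = D r t + D (r + 1) s`, hence `D r s = a r + b s` with
nonnegative `a` and `b`. Summing up the swaps, the mechanism is a point voting rule with decreasing
scores plus a supporting size rule with increasing scores (Barberà). Finally, decreasing point
scores are nonnegative combinations of those of `J^{1,q}`, and increasing supporting size scores
with constant sums `G s + G (n - s)` are nonnegative combinations of those of `J^{2,q}`.
-/

/-- A strict ranking of the candidates: `ρ j` is the position of candidate `j`, with `0` the most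
preferred. Swapping the candidates `x` and `y` turns `ρ` into `ρ * Equiv.swap x y`. -/
abbrev Ballot (m : ℕ) := Equiv.Perm (Fin m)

namespace Ballot

variable {m : ℕ} {β : Type*}

theorem eq_of_mul_swap_eq {f : Ballot m → β}
    (hf : ∀ (ρ : Ballot m) (x y : Fin m), (ρ x : ℕ) + 1 = ρ y → f (ρ * Equiv.swap x y) = f ρ)
    (ρ ρ' : Ballot m) : f ρ = f ρ' := by
  obtain - | k := m
  · rw [Subsingleton.elim ρ ρ']
  have mul_left (g : Ballot (k + 1)) : ∀ ρ, f (g * ρ) = f ρ := by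
    have hg : g ∈ Submonoid.closure
        (Set.range fun i : Fin k ↦ Equiv.swap i.castSucc i.succ) := by
      simp only [Equiv.Perm.mclosure_swap_castSucc_succ, Submonoid.mem_top]
    induction hg using Submonoid.closure_induction with
    | mem g hg =>
      obtain ⟨i, rfl⟩ := hg
      intro ρ
      rw [Equiv.swap_mul_eq_mul_swap]
      exact hf ρ _ _ (by simp)
    | one => simp
    | mul g h _ _ ihg ihh => intro ρ; rw [mul_assoc, ihg, ihh]
  rw [← mul_left (ρ' * ρ⁻¹) ρ, inv_mul_cancel_right]

theorem mul_swap_lt_iff {ρ : Ballot m} {a b x y : Fin m} (hab : (ρ a : ℕ) + 1 = ρ b)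
    (hne : s(a, b) ≠ s(x, y)) :
    (ρ * Equiv.swap a b) x < (ρ * Equiv.swap a b) y ↔ ρ x < ρ y := by
  have inj (j k : Fin m) : (ρ j : ℕ) = ρ k ↔ j = k := by
    rw [← Fin.ext_iff, ρ.injective.eq_iff]
  have hxa := inj x a
  have hxb := inj x b
  have hya := inj y a
  have hyb := inj y b
  simp only [Equiv.Perm.mul_apply, Equiv.swap_apply_def, Fin.lt_def]
  grind

/-- Away from swaps of `x` and `y` themselves, adjacent swaps connect all rankings that order `x`
and `y` alike: folding the rankings with `y` above `x` onto the others makes all swaps available. -/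
theorem eq_of_mul_swap_eq_of_lt {f : Ballot m → β} {x y : Fin m}
    (hf : ∀ (ρ : Ballot m) (a b : Fin m), (ρ a : ℕ) + 1 = ρ b → s(a, b) ≠ s(x, y) →
      f (ρ * Equiv.swap a b) = f ρ) {ρ ρ' : Ballot m} (h : ρ x < ρ y) (h' : ρ' x < ρ' y) :
    f ρ = f ρ' := by
  let fold (ρ : Ballot m) : Ballot m := if ρ x < ρ y then ρ else ρ * Equiv.swap x y
  have swap_fold (ρ : Ballot m) (a b : Fin m) (hab : (ρ a : ℕ) + 1 = ρ b) :
      f (fold (ρ * Equiv.swap a b)) = f (fold ρ) := by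
    by_cases hpair : s(a, b) = s(x, y)
    · have hswap : Equiv.swap a b = Equiv.swap x y := by
        obtain ⟨rfl, rfl⟩ | ⟨rfl, rfl⟩ := Sym2.eq_iff.1 hpair
        exacts [rfl, Equiv.swap_comm _ _]
      have hxy : ρ x ≠ ρ y := ρ.injective.ne (by rintro rfl; exact h.false)
      obtain hlt | hlt := lt_or_gt_of_ne hxy
      · simp [fold, hswap, hlt, hlt.not_gt, mul_assoc]
      · simp [fold, hswap, hlt, hlt.not_gt]
    · by_cases hlt : ρ x < ρ y
      · simpa only [fold, mul_swap_lt_iff hab hpair, hlt, if_true] using hf ρ a b hab hpair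
      · have key := hf (ρ * Equiv.swap x y) (Equiv.swap x y a) (Equiv.swap x y b) (by simpa)
          (by grind)
        simp only [fold, mul_swap_lt_iff hab hpair, hlt, if_false]
        rw [← key, mul_assoc, Equiv.swap_mul_eq_mul_swap, Equiv.swap_inv, ← mul_assoc]
  simpa only [fold, Function.comp_apply, h, h', if_true] using
    eq_of_mul_swap_eq (f := f ∘ fold) swap_fold ρ ρ'

end Ballot

theorem eq_of_update_eq {V α β : Type*} [Finite V] [DecidableEq V] {S : V → Set α}
    {f : (V → α) → β}
    (hf : ∀ ψ ∈ Set.univ.pi S, ∀ l, ∀ a ∈ S l, f (Function.update ψ l a) = f ψ) {π π' : V → α}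
    (hπ : π ∈ Set.univ.pi S) (hπ' : π' ∈ Set.univ.pi S) : f π = f π' := by
  have := Fintype.ofFinite V
  have hybrid (T : Finset V) : f (T.piecewise π' π) = f π := by
    induction T using Finset.induction_on with
    | empty => rw [piecewise_empty]
    | insert l T _ ih =>
      have hmem : T.piecewise π' π ∈ Set.univ.pi S := fun k _ ↦
        T.piecewise_cases π' π (· ∈ S k) (hπ' k trivial) (hπ k trivial)
      rw [piecewise_insert, hf _ hmem l _ (hπ' l trivial), ih]
  rw [← hybrid univ, piecewise_univ]

section Profiles

variable {V : Type*} [DecidableEq V] {m : ℕ}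

/-- The profile of ballots obtained from `π` when voter `i` swaps the candidates `x` and `y`. -/
def swapAt (π : V → Ballot m) (i : V) (x y : Fin m) : V → Ballot m :=
  Function.update π i (π i * Equiv.swap x y)

@[simp]
theorem swapAt_apply_self (π : V → Ballot m) (i : V) (x y : Fin m) :
    swapAt π i x y i = π i * Equiv.swap x y :=
  Function.update_self ..

theorem swapAt_apply_of_ne {i l : V} (h : l ≠ i) (π : V → Ballot m) (x y : Fin m) :
    swapAt π i x y l = π l :=
  Function.update_of_ne h ..

theorem swapAt_comm (π : V → Ballot m) (i : V) (x y : Fin m) :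
    swapAt π i x y = swapAt π i y x := by
  rw [swapAt, Equiv.swap_comm, swapAt]

@[simp]
theorem swapAt_swapAt (π : V → Ballot m) (i : V) (x y : Fin m) :
    swapAt (swapAt π i x y) i x y = π := by
  simp [swapAt]

theorem swapAt_swapAt_comm {i l : V} (h : l ≠ i) (π : V → Ballot m) (a b x y : Fin m) :
    swapAt (swapAt π l a b) i x y = swapAt (swapAt π i x y) l a b := by
  simp only [swapAt, Function.update_of_ne h, Function.update_of_ne h.symm, Function.update_comm h]

theorem eq_of_swapAt_eq [Finite V] {β : Type*} {f : (V → Ballot m) → β}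
    (hf : ∀ π i x y, (π i x : ℕ) + 1 = π i y → f (swapAt π i x y) = f π) (π π' : V → Ballot m) :
    f π = f π' := by
  refine eq_of_update_eq (S := fun _ ↦ Set.univ) (fun ψ _ l ρ _ ↦ ?_) (by simp) (by simp)
  have hupdate : ∀ ρ x y, (ρ x : ℕ) + 1 = ρ y →
      f (Function.update ψ l (ρ * Equiv.swap x y)) = f (Function.update ψ l ρ) := by
    intro ρ x y hxy
    simpa [swapAt] using hf (Function.update ψ l ρ) l x y (by simpa)
  simpa using Ballot.eq_of_mul_swap_eq (f := fun ρ ↦ f (Function.update ψ l ρ)) hupdate ρ (ψ l)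

end Profiles

section Support

variable {V : Type*} [Fintype V] {m : ℕ}

/-- The number of voters who rank `x` above `y`. -/
def supportCount (π : V → Ballot m) (x y : Fin m) : ℕ :=
  #{l | π l x < π l y}

theorem supportCount_add_supportCount (π : V → Ballot m) {x y : Fin m} (h : x ≠ y) :
    supportCount π x y + supportCount π y x = Fintype.card V := by
  have hyx : supportCount π y x = #{l | ¬ π l x < π l y} := by
    refine congrArg card (filter_congr fun l _ ↦ ?_)
    rw [not_lt, ((π l).injective.ne h.symm).le_iff_lt]
  rw [hyx, supportCount, card_filter_add_card_filter_not, card_univ]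

variable [DecidableEq V]

theorem supportCount_swapAt_of_ne {π : V → Ballot m} {i : V} {a b x y : Fin m}
    (hab : (π i a : ℕ) + 1 = π i b) (hne : s(a, b) ≠ s(x, y)) :
    supportCount (swapAt π i a b) x y = supportCount π x y := by
  refine congrArg card (filter_congr fun l _ ↦ ?_)
  obtain rfl | hl := eq_or_ne l i
  · rw [swapAt_apply_self, Ballot.mul_swap_lt_iff hab hne]
  · rw [swapAt_apply_of_ne hl]

theorem supportCount_swapAt_add_one {π : V → Ballot m} {i : V} {x y : Fin m}
    (h : π i x < π i y) : supportCount (swapAt π i x y) x y + 1 = supportCount π x y := by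
  have herase : ({l | swapAt π i x y l x < swapAt π i x y l y} : Finset V) =
      ({l | π l x < π l y} : Finset V).erase i := by
    ext l
    obtain rfl | hl := eq_or_ne l i
    · simp [h.le]
    · simp [swapAt_apply_of_ne hl, hl]
  rw [supportCount, herase, card_erase_add_one (by simpa using h), supportCount]

theorem supportCount_swapAt_swap {π : V → Ballot m} {i : V} {x y : Fin m}
    (h : π i x < π i y) : supportCount (swapAt π i x y) y x = supportCount π y x + 1 := by
  have hback : swapAt π i x y i y < swapAt π i x y i x := by simpa
  simpa only [swapAt_comm _ i y x, swapAt_swapAt] using (supportCount_swapAt_add_one hback).symm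

end Support

theorem exists_perm_apply_eq_and_mem_iff {α : Type*} [Finite α] {s t : Finset α} {a b : α}
    (ha : a ∈ s) (hb : b ∈ t) (h : #s = #t) :
    ∃ σ : Equiv.Perm α, σ a = b ∧ ∀ x, σ x ∈ t ↔ x ∈ s := by
  classical
  let e : {x // x ∈ s} ≃ {x // x ∈ t} := equivOfCardEq h
  have mem_iff (x : α) : e.extendSubtype x ∈ t ↔ x ∈ s :=
    ⟨not_imp_not.1 (e.extendSubtype_not_mem x), e.extendSubtype_mem x⟩
  refine ⟨e.extendSubtype.trans (Equiv.swap (e.extendSubtype a) b), by simp, fun x ↦ ?_⟩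
  rw [← mem_iff x, Equiv.trans_apply, Equiv.swap_apply_def]
  split_ifs with h₁ h₂
  · simp only [h₁, hb, mem_iff, ha]
  · simp only [h₂, hb, mem_iff, ha]
  · rfl

section Response

variable {V : Type*} [DecidableEq V] {m : ℕ} {p : (V → Ballot m) → Fin m → ℝ}

/-- Gibbard's description of truthfulness for a mechanism `p` on ballots: when a voter swaps the
adjacent candidates `x` and `y`, the probabilities of the others do not change, and some
probability may move from the demoted candidate `x` to the promoted candidate `y`. -/
structure SwapMonotone (p : (V → Ballot m) → Fin m → ℝ) : Prop where
  swapAt_of_ne {π : V → Ballot m} {i : V} {x y z : Fin m} (hxy : (π i x : ℕ) + 1 = π i y)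
    (hzx : z ≠ x) (hzy : z ≠ y) : p (swapAt π i x y) z = p π z
  swapAt_add {π : V → Ballot m} {i : V} {x y : Fin m} (hxy : (π i x : ℕ) + 1 = π i y) :
    p (swapAt π i x y) x + p (swapAt π i x y) y = p π x + p π y
  swapAt_le {π : V → Ballot m} {i : V} {x y : Fin m} (hxy : (π i x : ℕ) + 1 = π i y) :
    p (swapAt π i x y) x ≤ p π x

/-- Neutrality of a mechanism on ballots: relabelling the candidates relabels the outcome. -/
def BallotNeutral (p : (V → Ballot m) → Fin m → ℝ) : Prop :=
  ∀ (τ : Equiv.Perm (Fin m)) (π : V → Ballot m) (j : Fin m), p (fun i ↦ π i * τ) j = p π (τ j)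

/-- Anonymity of a mechanism on ballots: permuting the voters does not change the outcome. -/
def BallotAnonymous (p : (V → Ballot m) → Fin m → ℝ) : Prop :=
  ∀ (σ : Equiv.Perm V) (π : V → Ballot m), p (π ∘ σ) = p π

/-- The probability that `x` loses when voter `i` swaps `x` with `y`. -/
def swapLoss (p : (V → Ballot m) → Fin m → ℝ) (π : V → Ballot m) (i : V) (x y : Fin m) : ℝ :=
  p π x - p (swapAt π i x y) x

theorem swapLoss_mul_right (hN : BallotNeutral p) (τ : Equiv.Perm (Fin m)) (π : V → Ballot m)
    (i : V) (x y : Fin m) : swapLoss p (fun l ↦ π l * τ) i x y = swapLoss p π i (τ x) (τ y) := by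
  have hswap : swapAt (fun l ↦ π l * τ) i x y = fun l ↦ swapAt π i (τ x) (τ y) l * τ := by
    funext l
    obtain rfl | hl := eq_or_ne l i
    · simp only [swapAt_apply_self, mul_assoc, Equiv.mul_swap_eq_swap_mul τ]
    · simp only [swapAt_apply_of_ne hl]
  rw [swapLoss, hswap, hN, hN, swapLoss]

theorem swapLoss_comp (hA : BallotAnonymous p) (σ : Equiv.Perm V) (π : V → Ballot m)
    (i : V) (x y : Fin m) : swapLoss p (π ∘ σ) i x y = swapLoss p π (σ i) x y := by
  have hswap : swapAt (π ∘ σ) i x y = swapAt π (σ i) x y ∘ σ := by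
    simp only [swapAt, Function.update_comp_equiv, Equiv.symm_apply_apply, Function.comp_apply]
  rw [swapLoss, hswap, hA, hA, swapLoss]

namespace SwapMonotone

theorem swapLoss_eq_gain (hp : SwapMonotone p) {π : V → Ballot m} {i : V} {x y : Fin m}
    (hxy : (π i x : ℕ) + 1 = π i y) : swapLoss p π i x y = p (swapAt π i x y) y - p π y := by
  have := hp.swapAt_add hxy
  rw [swapLoss]
  linarith

theorem swapLoss_swapAt (hp : SwapMonotone p) {π : V → Ballot m} {i l : V} {a b x y : Fin m}
    (hl : l ≠ i) (hxy : (π i x : ℕ) + 1 = π i y) (hab : (π l a : ℕ) + 1 = π l b)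
    (hne : s(a, b) ≠ s(x, y)) : swapLoss p (swapAt π l a b) i x y = swapLoss p π i x y := by
  have hxy' : (swapAt π l a b i x : ℕ) + 1 = swapAt π l a b i y := by
    simpa only [swapAt_apply_of_ne hl.symm] using hxy
  have hab' : (swapAt π i x y l a : ℕ) + 1 = swapAt π i x y l b := by
    simpa only [swapAt_apply_of_ne hl] using hab
  have hout : (x ≠ a ∧ x ≠ b) ∨ (y ≠ a ∧ y ≠ b) := by
    have : a ≠ b := by rintro rfl; omega
    grind
  obtain ⟨ha, hb⟩ | ⟨ha, hb⟩ := hout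
  · rw [swapLoss, swapAt_swapAt_comm hl, hp.swapAt_of_ne hab' ha hb, hp.swapAt_of_ne hab ha hb,
      swapLoss]
  · rw [hp.swapLoss_eq_gain hxy', swapAt_swapAt_comm hl, hp.swapAt_of_ne hab' ha hb,
      hp.swapAt_of_ne hab ha hb, hp.swapLoss_eq_gain hxy]

theorem swapLoss_update (hp : SwapMonotone p) {π : V → Ballot m} {i l : V} {x y : Fin m}
    (hl : l ≠ i) (hxy : (π i x : ℕ) + 1 = π i y) {ρ : Ballot m} (hρ : ρ x < ρ y ↔ π l x < π l y) :
    swapLoss p (Function.update π l ρ) i x y = swapLoss p π i x y := by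
  let f (ρ : Ballot m) : ℝ := swapLoss p (Function.update π l ρ) i x y
  have hf (ρ : Ballot m) (a b : Fin m) (hab : (ρ a : ℕ) + 1 = ρ b) (hne : s(a, b) ≠ s(x, y)) :
      f (ρ * Equiv.swap a b) = f ρ := by
    simpa [swapAt, f] using hp.swapLoss_swapAt (π := Function.update π l ρ) hl
      (by simpa [Function.update_of_ne hl.symm]) (by simpa) hne
  have hx : f ρ = f (π l) := by
    have hne : x ≠ y := by rintro rfl; omega
    obtain hlt | hlt := lt_or_gt_of_ne ((π l).injective.ne hne)
    · exact Ballot.eq_of_mul_swap_eq_of_lt hf (hρ.2 hlt) hlt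
    · have hlt' : ρ y < ρ x := (ρ.injective.ne hne.symm).lt_of_le (not_lt.1 (hρ.not.2 hlt.not_gt))
      exact Ballot.eq_of_mul_swap_eq_of_lt (by simpa only [Sym2.eq_swap (a := y)]) hlt' hlt
  simpa [f] using hx

theorem swapLoss_congr [Finite V] (hp : SwapMonotone p) {π π' : V → Ballot m} {i : V}
    {x y : Fin m} (hi : π i = π' i) (hxy : (π i x : ℕ) + 1 = π i y)
    (h : ∀ l, π l x < π l y ↔ π' l x < π' l y) : swapLoss p π i x y = swapLoss p π' i x y := by
  let S (l : V) : Set (Ballot m) := {ρ | (ρ x < ρ y ↔ π l x < π l y) ∧ (l = i → ρ = π i)}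
  refine eq_of_update_eq (S := S) (f := fun ψ ↦ swapLoss p ψ i x y) (fun ψ hψ l ρ hρ ↦ ?_)
    (fun l _ ↦ ⟨Iff.rfl, fun hl ↦ hl ▸ rfl⟩) (fun l _ ↦ ⟨(h l).symm, fun hl ↦ hl ▸ hi.symm⟩)
  have hψi : ψ i = π i := (hψ i trivial).2 rfl
  obtain rfl | hl := eq_or_ne l i
  · rw [hρ.2 rfl, ← hψi, Function.update_eq_self]
  · exact hp.swapLoss_update hl (by rwa [hψi]) (hρ.1.trans (hψ l trivial).1.symm)

theorem swapLoss_eq_of_supportCount_eq [Fintype V] (hp : SwapMonotone p) (hN : BallotNeutral p)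
    (hA : BallotAnonymous p) {π π' : V → Ballot m} {i i' : V} {x y x' y' : Fin m}
    (hxy : (π i x : ℕ) + 1 = π i y) (hxy' : (π' i' x' : ℕ) + 1 = π' i' y')
    (hrank : π i x = π' i' x') (hcount : supportCount π x y = supportCount π' x' y') :
    swapLoss p π i x y = swapLoss p π' i' x' y' := by
  obtain ⟨σ, hσi, hσ⟩ := exists_perm_apply_eq_and_mem_iff (a := i) (b := i')
    (mem_filter.2 ⟨mem_univ _, by omega⟩) (mem_filter.2 ⟨mem_univ _, by omega⟩) hcount
  simp only [mem_filter, mem_univ, true_and] at hσ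
  let τ : Equiv.Perm (Fin m) := (π' i')⁻¹ * π i
  have hτx : τ x = x' := by simp [τ, hrank]
  have hτy : τ y = y' := by
    have : π i y = π' i' y' := Fin.ext (by omega)
    simp [τ, this]
  calc swapLoss p π i x y = swapLoss p (fun l ↦ (π' ∘ σ) l * τ) i x y := by
        refine hp.swapLoss_congr (by simp [τ, hσi]) hxy fun l ↦ ?_
        simp only [Function.comp_apply, Equiv.Perm.mul_apply, hτx, hτy, hσ]
    _ = swapLoss p π' i' x' y' := by
        rw [swapLoss_mul_right hN, hτx, hτy, swapLoss_comp hA, hσi]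

end SwapMonotone

end Response

section SwapResponse

variable {V : Type*} [Fintype V] [DecidableEq V] {m : ℕ} {p p' : (V → Ballot m) → Fin m → ℝ}
  {D : ℕ → ℕ → ℝ}

/-- A mechanism on ballots has swap response `D` if a voter who swaps a candidate in position `r`
with the next one, when `s` voters (the swapping one included) prefer the former, moves probability
`D r s` from the demoted to the promoted candidate and has no other effect. -/
structure HasSwapResponse (p : (V → Ballot m) → Fin m → ℝ) (D : ℕ → ℕ → ℝ) : Prop where
  of_ne {π : V → Ballot m} {i : V} {x y z : Fin m} (hxy : (π i x : ℕ) + 1 = π i y)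
    (hzx : z ≠ x) (hzy : z ≠ y) : p (swapAt π i x y) z = p π z
  demoted {π : V → Ballot m} {i : V} {x y : Fin m} (hxy : (π i x : ℕ) + 1 = π i y) :
    p (swapAt π i x y) x = p π x - D (π i x) (supportCount π x y)
  promoted {π : V → Ballot m} {i : V} {x y : Fin m} (hxy : (π i x : ℕ) + 1 = π i y) :
    p (swapAt π i x y) y = p π y + D (π i x) (supportCount π x y)

theorem SwapMonotone.exists_hasSwapResponse (hp : SwapMonotone p) (hN : BallotNeutral p)
    (hA : BallotAnonymous p) : ∃ D : ℕ → ℕ → ℝ, (∀ r s, 0 ≤ D r s) ∧ HasSwapResponse p D := by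
  let Swap := {q : (V → Ballot m) × V × Fin m × Fin m //
    (q.1 q.2.1 q.2.2.1 : ℕ) + 1 = q.1 q.2.1 q.2.2.2}
  let key (q : Swap) : ℕ × ℕ := (q.1.1 q.1.2.1 q.1.2.2.1, supportCount q.1.1 q.1.2.2.1 q.1.2.2.2)
  let loss (q : Swap) : ℝ := swapLoss p q.1.1 q.1.2.1 q.1.2.2.1 q.1.2.2.2
  have hfactor : loss.FactorsThrough key := fun q q' h ↦
    hp.swapLoss_eq_of_supportCount_eq hN hA q.2 q'.2 (Fin.ext (Prod.ext_iff.1 h).1)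
      (Prod.ext_iff.1 h).2
  have hD {π : V → Ballot m} {i : V} {x y : Fin m} (hxy : (π i x : ℕ) + 1 = π i y) :
      Function.extend key loss 0 (π i x, supportCount π x y) = swapLoss p π i x y :=
    hfactor.extend_apply 0 ⟨(π, i, x, y), hxy⟩
  refine ⟨fun r s ↦ Function.extend key loss 0 (r, s), fun r s ↦ ?_, hp.swapAt_of_ne, ?_, ?_⟩
  · by_cases h : ∃ q, key q = (r, s)
    · obtain ⟨q, hq⟩ := h
      simp only [← hq, hfactor.extend_apply]
      exact sub_nonneg.2 (hp.swapAt_le q.2)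
    · simp only [Function.extend_apply' _ _ _ h, Pi.zero_apply, le_rfl]
  · intro π i x y hxy
    rw [hD hxy, swapLoss, sub_sub_cancel]
  · intro π i x y hxy
    rw [hD hxy, hp.swapLoss_eq_gain hxy, add_sub_cancel]

namespace HasSwapResponse

theorem eq_of_swap_back (hD : HasSwapResponse p D) {π : V → Ballot m} {i : V} {x y : Fin m}
    (hxy : (π i x : ℕ) + 1 = π i y) :
    D (π i x) (supportCount π x y) = D (π i x) (supportCount π y x + 1) := by
  have hback : (swapAt π i x y i y : ℕ) + 1 = swapAt π i x y i x := by simpa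
  have hgain := hD.promoted hback
  rw [swapAt_comm _ i y x, swapAt_swapAt, hD.demoted hxy,
    supportCount_swapAt_swap (Fin.lt_def.2 (by omega))] at hgain
  simp only [swapAt_apply_self, Equiv.Perm.mul_apply, Equiv.swap_apply_right] at hgain
  linarith

theorem symm (hD : HasSwapResponse p D) {r s t : ℕ} (hr : r + 1 < m) (hs : 1 ≤ s) (ht : 1 ≤ t)
    (hst : s + t = Fintype.card V + 1) : D r s = D r t := by
  obtain ⟨A, -, hA⟩ := exists_subset_card_eq (show s ≤ #(univ : Finset V) by rw [card_univ]; omega)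
  obtain ⟨i, hi⟩ : A.Nonempty := card_pos.1 (by omega)
  let x : Fin m := ⟨r, by omega⟩
  let y : Fin m := ⟨r + 1, hr⟩
  let π (l : V) : Ballot m := if l ∈ A then 1 else Equiv.swap x y
  have hxy : x ≠ y := by simp [x, y]
  have hx : supportCount π x y = s := by
    rw [← hA]
    refine congrArg card (Finset.ext fun l ↦ ?_)
    by_cases hl : l ∈ A <;> simp [π, hl, x, y]
  have hy : supportCount π y x + 1 = t := by
    have := supportCount_add_supportCount π hxy
    omega
  have hback := hD.eq_of_swap_back (π := π) (i := i) (x := x) (y := y) (by simp [π, hi, x, y])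
  simpa only [hx, hy, π, hi, if_true, Equiv.Perm.one_apply, x] using hback

theorem apply_middle_of_demoted_first (hD : HasSwapResponse p D) {π : V → Ballot m} {i : V}
    {a x y : Fin m} (hax : (π i a : ℕ) + 1 = π i x) (hxy : (π i x : ℕ) + 1 = π i y) :
    p (swapAt (swapAt (swapAt π i x y) i a y) i a x) x =
      p π x - D (π i x) (supportCount π x y) + D (π i x) (supportCount π a x) := by
  have ha_x : a ≠ x := by rintro rfl; omega
  have ha_y : a ≠ y := by rintro rfl; omega
  have hx_y : x ≠ y := by rintro rfl; omega
  let π₁ := swapAt π i x y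
  have h₁ : π₁ i a = π i a ∧ π₁ i y = π i x ∧ π₁ i x = π i y := by
    simp [π₁, Equiv.swap_apply_of_ne_of_ne ha_x ha_y]
  have h₂ : swapAt π₁ i a y i a = π i x ∧ swapAt π₁ i a y i x = π i y := by
    simp [h₁, Equiv.swap_apply_of_ne_of_ne ha_x.symm hx_y]
  have hay : (π₁ i a : ℕ) + 1 = π₁ i y := by rw [h₁.1, h₁.2.1, hax]
  rw [hD.promoted (by rw [h₂.1, h₂.2, hxy]), h₂.1, hD.of_ne hay ha_x.symm hx_y, hD.demoted hxy,
    supportCount_swapAt_of_ne hay (by simp [ha_y.symm, hx_y.symm]),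
    supportCount_swapAt_of_ne hxy (by simp [ha_x.symm, ha_y.symm])]

theorem apply_middle_of_promoted_first (hD : HasSwapResponse p D) {π : V → Ballot m} {i : V}
    {a x y : Fin m} (hax : (π i a : ℕ) + 1 = π i x) (hxy : (π i x : ℕ) + 1 = π i y) :
    p (swapAt (swapAt (swapAt π i a x) i a y) i x y) x =
      p π x + D (π i a) (supportCount π a x) - D (π i a) (supportCount π x y) := by
  have ha_x : a ≠ x := by rintro rfl; omega
  have ha_y : a ≠ y := by rintro rfl; omega
  have hx_y : x ≠ y := by rintro rfl; omega
  let π₁ := swapAt π i a x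
  have h₁ : π₁ i x = π i a ∧ π₁ i a = π i x ∧ π₁ i y = π i y := by
    simp [π₁, Equiv.swap_apply_of_ne_of_ne ha_y.symm hx_y.symm]
  have h₂ : swapAt π₁ i a y i x = π i a ∧ swapAt π₁ i a y i y = π i x := by
    simp [h₁, Equiv.swap_apply_of_ne_of_ne ha_x.symm hx_y]
  have hay : (π₁ i a : ℕ) + 1 = π₁ i y := by rw [h₁.2.1, h₁.2.2, hxy]
  rw [hD.demoted (by rw [h₂.1, h₂.2, hax]), h₂.1, hD.of_ne hay ha_x.symm hx_y, hD.promoted hax,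
    supportCount_swapAt_of_ne hay (by simp [ha_x, ha_y]),
    supportCount_swapAt_of_ne hax (by simp [ha_x, ha_y])]

/-- Reverse the consecutive candidates `a`, `x`, `y` on the ballot of voter `i` along the two
possible sequences of adjacent swaps, and compare the resulting probabilities of `x`. -/
theorem hexagon (hD : HasSwapResponse p D) {π : V → Ballot m} {i : V} {a x y : Fin m}
    (hax : (π i a : ℕ) + 1 = π i x) (hxy : (π i x : ℕ) + 1 = π i y) :
    D (π i a) (supportCount π a x) + D (π i x) (supportCount π x y) =
      D (π i a) (supportCount π x y) + D (π i x) (supportCount π a x) := by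
  have hreverse : Equiv.swap x y * (Equiv.swap a y * Equiv.swap a x) =
      Equiv.swap a x * (Equiv.swap a y * Equiv.swap x y) := by
    have : a ≠ x ∧ a ≠ y ∧ x ≠ y := by refine ⟨?_, ?_, ?_⟩ <;> rintro rfl <;> omega
    ext z
    simp only [Equiv.Perm.mul_apply, Equiv.swap_apply_def]
    grind
  have hend : swapAt (swapAt (swapAt π i x y) i a y) i a x =
      swapAt (swapAt (swapAt π i a x) i a y) i x y := by
    simp only [swapAt, Function.update_idem, Function.update_self, mul_assoc, hreverse]
  have hdown := hD.apply_middle_of_demoted_first hax hxy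
  have hup := hD.apply_middle_of_promoted_first hax hxy
  rw [hend] at hdown
  linarith

theorem exchange (hD : HasSwapResponse p D) {r s t : ℕ} (hr : r + 2 < m)
    (hs : s ∈ Icc 1 (Fintype.card V)) (ht : t ∈ Icc 1 (Fintype.card V)) :
    D r s + D (r + 1) t = D r t + D (r + 1) s := by
  rw [mem_Icc] at hs ht
  have : Nonempty V := Fintype.card_pos_iff.1 (by omega)
  let i : V := Classical.arbitrary V
  obtain ⟨A, hiA, -, hA⟩ := exists_subsuperset_card_eq (n := s) (subset_univ {i})
    (by simpa using hs.1) (by simpa using hs.2)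
  obtain ⟨B, hiB, -, hB⟩ := exists_subsuperset_card_eq (n := t) (subset_univ {i})
    (by simpa using ht.1) (by simpa using ht.2)
  rw [singleton_subset_iff] at hiA hiB
  let a : Fin m := ⟨r, by omega⟩
  let x : Fin m := ⟨r + 1, by omega⟩
  let y : Fin m := ⟨r + 2, hr⟩
  let π (l : V) : Ballot m :=
    if l ∈ A then (if l ∈ B then 1 else Equiv.swap x y)
    else if l ∈ B then Equiv.swap a x else Equiv.swap a y
  have hax : supportCount π a x = s := by
    rw [← hA]
    refine congrArg card (Finset.ext fun l ↦ ?_)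
    by_cases hlA : l ∈ A <;> by_cases hlB : l ∈ B <;>
      simp [π, hlA, hlB, a, x, y, Equiv.swap_apply_def]
  have hxy : supportCount π x y = t := by
    rw [← hB]
    refine congrArg card (Finset.ext fun l ↦ ?_)
    by_cases hlA : l ∈ A <;> by_cases hlB : l ∈ B <;>
      simp [π, hlA, hlB, a, x, y, Equiv.swap_apply_def]
  have hπi : π i = 1 := by simp only [π, hiA, hiB, if_true]
  have := hD.hexagon (π := π) (i := i) (a := a) (x := x) (y := y) (by simp [hπi, a, x])
    (by simp [hπi, x, y])
  simpa only [hax, hxy, hπi, Equiv.Perm.one_apply, a, x] using this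

end HasSwapResponse

end SwapResponse

theorem exists_add_of_exchange {D : ℕ → ℕ → ℝ} {m : ℕ} {S : Finset ℕ} (hS : S.Nonempty)
    (hD₀ : ∀ r s, 0 ≤ D r s)
    (hD : ∀ r s t, r + 2 < m → s ∈ S → t ∈ S → D r s + D (r + 1) t = D r t + D (r + 1) s) :
    ∃ a b : ℕ → ℝ, (∀ r, 0 ≤ a r) ∧ (∀ s, 0 ≤ b s) ∧
      ∀ r s, r + 1 < m → s ∈ S → D r s = a r + b s := by
  obtain ⟨s₀, hs₀, hmin⟩ := S.exists_min_image (D 0) hS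
  refine ⟨fun r ↦ D r s₀, fun s ↦ max (D 0 s - D 0 s₀) 0, fun r ↦ hD₀ r s₀,
    fun s ↦ le_max_right _ _, fun r s hr hs ↦ ?_⟩
  simp only [max_eq_left (sub_nonneg.2 (hmin s hs))]
  induction r with
  | zero => ring
  | succ r ih => linarith [ih (by omega), hD r s s₀ (by omega) hs hs₀]

section VotingRules

variable {V : Type*} [Fintype V] {m : ℕ}

/-- The point voting rule: a voter gives `F r` points to the candidate in position `r`. -/
def pointVoting (F : ℕ → ℝ) (π : V → Ballot m) (j : Fin m) : ℝ :=
  ∑ i, F (π i j)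

/-- The supporting size rule: a candidate receives `G s` points for each other candidate above whom
exactly `s` voters rank it. -/
def supportingSize (G : ℕ → ℝ) (π : V → Ballot m) (j : Fin m) : ℝ :=
  ∑ k ∈ univ.erase j, G (supportCount π j k)

variable [DecidableEq V]

theorem pointVoting_swapAt (F : ℕ → ℝ) (π : V → Ballot m) (i : V) (x y j : Fin m) :
    pointVoting F (swapAt π i x y) j =
      pointVoting F π j + (F (π i (Equiv.swap x y j)) - F (π i j)) := by
  rw [← sub_eq_iff_eq_add', pointVoting, pointVoting, ← sum_sub_distrib,
    Fintype.sum_eq_single i fun l hl ↦ by rw [swapAt_apply_of_ne hl, sub_self], swapAt_apply_self,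
    Equiv.Perm.mul_apply]

theorem hasSwapResponse_pointVoting (F : ℕ → ℝ) :
    HasSwapResponse (pointVoting F : (V → Ballot m) → Fin m → ℝ)
      fun r _ ↦ F r - F (r + 1) where
  of_ne _ hzx hzy := by
    rw [pointVoting_swapAt, Equiv.swap_apply_of_ne_of_ne hzx hzy, sub_self, add_zero]
  demoted hxy := by
    rw [pointVoting_swapAt, Equiv.swap_apply_left, hxy]
    ring
  promoted hxy := by
    rw [pointVoting_swapAt, Equiv.swap_apply_right, hxy]

theorem supportingSize_swapAt_of_ne (G : ℕ → ℝ) {π : V → Ballot m} {i : V} {x y z : Fin m}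
    (hxy : (π i x : ℕ) + 1 = π i y) (hzx : z ≠ x) (hzy : z ≠ y) :
    supportingSize G (swapAt π i x y) z = supportingSize G π z :=
  sum_congr rfl fun k _ ↦ by
    rw [supportCount_swapAt_of_ne hxy (by simp [hzx.symm, hzy.symm])]

theorem supportingSize_swapAt (G : ℕ → ℝ) {π : V → Ballot m} {i : V} {x y j k : Fin m}
    (hxy : (π i x : ℕ) + 1 = π i y) (hjk : s(x, y) = s(j, k)) :
    supportingSize G (swapAt π i x y) j = supportingSize G π j +
      (G (supportCount (swapAt π i x y) j k) - G (supportCount π j k)) := by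
  have hne : x ≠ y := by rintro rfl; omega
  have hk : k ∈ univ.erase j := by rw [mem_erase]; grind
  rw [← sub_eq_iff_eq_add', supportingSize, supportingSize, ← sum_sub_distrib]
  refine sum_eq_single_of_mem k hk fun l _ hl ↦ ?_
  rw [supportCount_swapAt_of_ne hxy (by grind), sub_self]

theorem hasSwapResponse_supportingSize {G : ℕ → ℝ}
    (hG : ∀ s t, s + t = Fintype.card V → G s + G t = G 0 + G (Fintype.card V)) :
    HasSwapResponse (supportingSize G : (V → Ballot m) → Fin m → ℝ)
      fun _ s ↦ G s - G (s - 1) where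
  of_ne := supportingSize_swapAt_of_ne G
  demoted {π i x y} hxy := by
    have hlt : π i x < π i y := Fin.lt_def.2 (by omega)
    rw [supportingSize_swapAt G hxy rfl, ← supportCount_swapAt_add_one hlt, Nat.add_sub_cancel]
    ring
  promoted {π i x y} hxy := by
    have hlt : π i x < π i y := Fin.lt_def.2 (by omega)
    have hne : x ≠ y := by rintro rfl; omega
    have hbefore := hG _ _ (supportCount_add_supportCount π hne)
    have hafter := hG _ _ (supportCount_add_supportCount (swapAt π i x y) hne)
    rw [supportingSize_swapAt G hxy Sym2.eq_swap]
    rw [← supportCount_swapAt_add_one hlt, Nat.add_sub_cancel] at *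
    linarith

end VotingRules

namespace HasSwapResponse

variable {V : Type*} [Fintype V] [DecidableEq V] {m : ℕ} {p p' : (V → Ballot m) → Fin m → ℝ}
  {D D' : ℕ → ℕ → ℝ}

theorem add (hD : HasSwapResponse p D) (hD' : HasSwapResponse p' D') :
    HasSwapResponse (p + p') (D + D') where
  of_ne hxy hzx hzy := by
    simp only [Pi.add_apply, hD.of_ne hxy hzx hzy, hD'.of_ne hxy hzx hzy]
  demoted hxy := by
    simp only [Pi.add_apply, hD.demoted hxy, hD'.demoted hxy]
    ring
  promoted hxy := by
    simp only [Pi.add_apply, hD.promoted hxy, hD'.promoted hxy]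
    ring

theorem sub_eq_sub (hD : HasSwapResponse p D) (hD' : HasSwapResponse p' D')
    (h : ∀ r s, r + 1 < m → s ∈ Icc 1 (Fintype.card V) → D r s = D' r s)
    (π π' : V → Ballot m) (j : Fin m) : p π j - p' π j = p π' j - p' π' j := by
  refine eq_of_swapAt_eq (f := fun π ↦ p π j - p' π j) (fun π i x y hxy ↦ ?_) π π'
  have hresponse : D (π i x) (supportCount π x y) = D' (π i x) (supportCount π x y) := by
    have hi : i ∈ ({l | π l x < π l y} : Finset V) := by
      simpa using Fin.lt_def.2 (by omega)
    exact h _ _ (by omega) (mem_Icc.2 ⟨card_pos.2 ⟨i, hi⟩, card_le_univ _⟩)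
  obtain rfl | hx := eq_or_ne j x
  · simp only [hD.demoted hxy, hD'.demoted hxy, hresponse, sub_sub_sub_cancel_right]
  obtain rfl | hy := eq_or_ne j y
  · simp only [hD.promoted hxy, hD'.promoted hxy, hresponse, add_sub_add_right_eq_sub]
  · simp only [hD.of_ne hxy hx hy, hD'.of_ne hxy hx hy]

end HasSwapResponse

theorem exists_antitone_sub_succ_eq {a : ℕ → ℝ} (ha : ∀ r, 0 ≤ a r) (k : ℕ) :
    ∃ F : ℕ → ℝ, Antitone F ∧ (∀ t, k ≤ t → F t = 0) ∧ ∀ r < k, F r - F (r + 1) = a r := by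
  refine ⟨fun t ↦ ∑ r ∈ Ico t k, a r, fun t t' h ↦ ?_, fun t ht ↦ ?_, fun r hr ↦ ?_⟩
  · exact sum_le_sum_of_subset_of_nonneg (Ico_subset_Ico_left h) fun r _ _ ↦ ha r
  · simp only [Ico_eq_empty_of_le ht, sum_empty]
  · simp only [sum_eq_sum_Ico_succ_bot hr, add_sub_cancel_right]

theorem exists_monotone_sub_pred_eq {b : ℕ → ℝ} {n : ℕ} (hb : ∀ s, 0 ≤ b s)
    (hsymm : ∀ s t, 1 ≤ s → 1 ≤ t → s + t = n + 1 → b s = b t) (c : ℝ) :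
    ∃ G : ℕ → ℝ, Monotone G ∧ G 0 = c ∧ (∀ s, 1 ≤ s → G s - G (s - 1) = b s) ∧
      ∀ s t, s + t = n → G s + G t = G 0 + G n := by
  let G (s : ℕ) : ℝ := c + ∑ k ∈ range s, b (k + 1)
  have G_succ (s : ℕ) : G (s + 1) = G s + b (s + 1) := by
    simp only [G, sum_range_succ, add_assoc]
  refine ⟨G, monotone_nat_of_le_succ fun s ↦ ?_, by simp [G], fun s hs ↦ ?_, fun s ↦ ?_⟩
  · rw [G_succ]
    exact le_add_of_nonneg_right (hb _)
  · obtain ⟨s, rfl⟩ := Nat.exists_eq_add_of_le' hs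
    rw [Nat.add_sub_cancel, G_succ, add_sub_cancel_left]
  · induction s with
    | zero => rintro t rfl; rw [zero_add]
    | succ s ih =>
      intro t hst
      have := ih (t + 1) (by omega)
      rw [G_succ, hsymm (s + 1) (t + 1) (by omega) (by omega) (by omega)]
      linarith [G_succ t]

section Barbera

variable {V : Type*} [Fintype V] {m : ℕ}

theorem pointVoting_of_unanimous (F : ℕ → ℝ) (ρ : Ballot m) (j : Fin m) :
    pointVoting F (fun _ : V ↦ ρ) j = Fintype.card V * F (ρ j) := by
  rw [pointVoting, sum_const, card_univ, nsmul_eq_mul]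

theorem supportingSize_of_unanimous_last (G : ℕ → ℝ) {ρ : Ballot m} {j : Fin m}
    (hj : (ρ j : ℕ) + 1 = m) :
    supportingSize G (fun _ : V ↦ ρ) j = ((m : ℝ) - 1) * G 0 := by
  have hcount (k : Fin m) : supportCount (fun _ : V ↦ ρ) j k = 0 :=
    card_eq_zero.2 (filter_eq_empty_iff.2 fun _ _ ↦ by simp only [Fin.lt_def]; omega)
  have hm : 1 ≤ m := by omega
  simp only [supportingSize, hcount, sum_const, mem_univ, card_erase_of_mem, card_univ,
    Fintype.card_fin, nsmul_eq_mul, Nat.cast_sub hm, Nat.cast_one]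

variable [DecidableEq V] {p : (V → Ballot m) → Fin m → ℝ}

theorem HasSwapResponse.exists_eq_add [Nonempty V] {D : ℕ → ℕ → ℝ} (hD : HasSwapResponse p D)
    (hm : 2 ≤ m) (hD₀ : ∀ r s, 0 ≤ D r s) :
    ∃ a b : ℕ → ℝ, (∀ r, 0 ≤ a r) ∧ (∀ s, 0 ≤ b s) ∧
      (∀ s t, 1 ≤ s → 1 ≤ t → s + t = Fintype.card V + 1 → b s = b t) ∧
      ∀ r s, r + 1 < m → s ∈ Icc 1 (Fintype.card V) → D r s = a r + b s := by
  obtain ⟨a, b, ha, hb, hab⟩ := exists_add_of_exchange (S := Icc 1 (Fintype.card V))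
    ⟨1, mem_Icc.2 ⟨le_rfl, Fintype.card_pos⟩⟩ hD₀ fun r s t hr hs ht ↦ hD.exchange hr hs ht
  refine ⟨a, b, ha, hb, fun s t hs ht hst ↦ ?_, hab⟩
  have := hD.symm (show 0 + 1 < m by omega) hs ht hst
  rwa [hab 0 s (by omega) (mem_Icc.2 (by omega)), hab 0 t (by omega) (mem_Icc.2 (by omega)),
    add_right_inj] at this

/-- Barberà's theorem, with truthfulness in the form of Gibbard's swap conditions. -/
theorem SwapMonotone.exists_eq_pointVoting_add_supportingSize [Nonempty V] (hm : 2 ≤ m)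
    (hp : SwapMonotone p) (hN : BallotNeutral p) (hA : BallotAnonymous p)
    (hp₀ : ∀ π j, 0 ≤ p π j) :
    ∃ F G : ℕ → ℝ, Antitone F ∧ (∀ t, m ≤ t + 1 → F t = 0) ∧ Monotone G ∧ 0 ≤ G 0 ∧
      (∀ s t, s + t = Fintype.card V → G s + G t = G 0 + G (Fintype.card V)) ∧
      p = pointVoting F + supportingSize G := by
  obtain ⟨D, hD₀, hD⟩ := hp.exists_hasSwapResponse hN hA
  obtain ⟨a, b, ha, hb, hb_symm, hab⟩ := hD.exists_eq_add hm hD₀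
  let last : Fin m := ⟨m - 1, by omega⟩
  have hm₁ : (0 : ℝ) < m - 1 := sub_pos.2 (by exact_mod_cast hm)
  obtain ⟨F, hF, hF₀, hFa⟩ := exists_antitone_sub_succ_eq ha (m - 1)
  obtain ⟨G, hG, hG₀, hGb, hGsymm⟩ :=
    exists_monotone_sub_pred_eq hb hb_symm (p (fun _ ↦ 1) last / (m - 1))
  refine ⟨F, G, hF, fun t ht ↦ hF₀ t (by omega), hG, hG₀ ▸ div_nonneg (hp₀ _ _) hm₁.le, hGsymm, ?_⟩
  let rule : (V → Ballot m) → Fin m → ℝ := pointVoting F + supportingSize G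
  have hrule : HasSwapResponse rule _ :=
    (hasSwapResponse_pointVoting F).add (hasSwapResponse_supportingSize hGsymm)
  have hresponse (r s : ℕ) (hr : r + 1 < m) (hs : s ∈ Icc 1 (Fintype.card V)) :
      D r s = F r - F (r + 1) + (G s - G (s - 1)) := by
    rw [hab r s hr hs, hFa r (by omega), hGb s (mem_Icc.1 hs).1]
  change p = rule
  ext π j
  let ρ : Ballot m := Equiv.swap j last
  have hρ : (ρ j : ℕ) + 1 = m := by
    simp only [ρ, Equiv.swap_apply_left, last]
    omega
  have hlast : p (fun _ ↦ ρ) j = rule (fun _ ↦ ρ) j := by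
    have hneutral : p (fun _ ↦ ρ) j = p (fun _ ↦ 1) last := by
      simpa [ρ] using hN ρ (fun _ ↦ 1) j
    simp only [rule, Pi.add_apply, pointVoting_of_unanimous, hF₀ (ρ j) (by omega),
      supportingSize_of_unanimous_last G hρ, hneutral, hG₀, mul_zero, zero_add,
      mul_div_cancel₀ _ hm₁.ne']
  linarith [hD.sub_eq_sub hrule hresponse π (fun _ ↦ ρ) j]

end Barbera

section Decomposition

/-- The point scheme of `Jone q` for `n` voters, as a function of the position on the ballot. -/
noncomputable def topScore (n q t : ℕ) : ℝ :=
  (if t < q then (q : ℝ)⁻¹ else 0) / n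

/-- The supporting size scheme of `Jtwo q` for `m` candidates and `n` voters. -/
noncomputable def quotaScore (m n q s : ℕ) : ℝ :=
  ((if q ≤ s then 1 else 0) + (if n < q + s then 1 else 0)) / (m * (m - 1) : ℕ)

/-- The weight of `Jone q` in the point voting rule with point scheme `F`. -/
def topWeight (n : ℕ) (F : ℕ → ℝ) (q : ℕ) : ℝ :=
  q * n * (F (q - 1) - F q)

/-- The weight of `Jtwo q` in the supporting size rule with scheme `G`. The two indicators in
`quotaScore` jump at `s = q` and at `s = n + 1 - q`; if both are equal, the weight is halved. -/
noncomputable def quotaWeight (m n : ℕ) (G : ℕ → ℝ) (q : ℕ) : ℝ :=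
  (m * (m - 1) : ℕ) *
    if q = n + 1 then G 0 else (G q - G (q - 1)) / if 2 * q = n + 1 then 2 else 1

theorem topWeight_nonneg {F : ℕ → ℝ} (hF : Antitone F) (n q : ℕ) : 0 ≤ topWeight n F q :=
  mul_nonneg (by positivity) (sub_nonneg.2 (hF (Nat.sub_le q 1)))

theorem quotaWeight_nonneg {G : ℕ → ℝ} (hG : Monotone G) (hG₀ : 0 ≤ G 0) (m n q : ℕ) :
    0 ≤ quotaWeight m n G q := by
  have := sub_nonneg.2 (hG (Nat.sub_le q 1))
  rw [quotaWeight]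
  split_ifs <;> positivity

theorem sum_Icc_ite_lt_sub (F : ℕ → ℝ) {t k : ℕ} (h : t ≤ k) :
    ∑ q ∈ Icc 1 k, (if t < q then F (q - 1) - F q else 0) = F t - F k := by
  induction k, h using Nat.le_induction with
  | base =>
    rw [sub_self]
    exact sum_eq_zero fun q hq ↦ if_neg (mem_Icc.1 hq).2.not_gt
  | succ k hk ih =>
    rw [sum_Icc_succ_top (by omega), ih, if_pos (by omega), Nat.add_sub_cancel]
    ring

theorem sum_topWeight_mul_topScore {F : ℕ → ℝ} {m n t : ℕ} (hn : n ≠ 0) (hF : F m = 0)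
    (ht : t ≤ m) : ∑ q ∈ Icc 1 m, topWeight n F q * topScore n q t = F t := by
  rw [← sub_zero (F t), ← hF, ← sum_Icc_ite_lt_sub F ht]
  refine sum_congr rfl fun q hq ↦ ?_
  have : q ≠ 0 := by rw [mem_Icc] at hq; omega
  rw [topWeight, topScore]
  split_ifs
  · field_simp
  · rw [zero_div, mul_zero]

theorem quotaScore_succ_sub (m : ℕ) {n s : ℕ} (hs : s < n) (q : ℕ) :
    quotaScore m n q (s + 1) - quotaScore m n q s =
      ((if q = s + 1 then 1 else 0) + (if q = n - s then 1 else 0)) / (m * (m - 1) : ℕ) := by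
  have h₁ : q ≤ s + 1 ↔ q ≤ s ∨ q = s + 1 := by omega
  have h₂ : n < q + (s + 1) ↔ n < q + s ∨ q = n - s := by omega
  simp only [quotaScore, ← sub_div, h₁, h₂]
  congr 1
  split_ifs <;> first | omega | norm_num

theorem sum_quotaWeight_mul_jump {G : ℕ → ℝ} {m n s : ℕ} (hm : 2 ≤ m)
    (hG : ∀ s t, s + t = n → G s + G t = G 0 + G n) (hs : s < n) :
    ∑ q ∈ Icc (n / 2 + 1) (n + 1), quotaWeight m n G q *
      (((if q = s + 1 then 1 else 0) + (if q = n - s then 1 else 0)) / (m * (m - 1) : ℕ)) =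
      G (s + 1) - G s := by
  have hpairs : ((m * (m - 1) : ℕ) : ℝ) ≠ 0 := by
    exact_mod_cast (Nat.mul_pos (by omega) (by omega)).ne'
  let v (q : ℕ) : ℝ := (G q - G (q - 1)) / if 2 * q = n + 1 then 2 else 1
  have hjump (e : ℕ) (he : e ≤ n) :
      (∑ q ∈ Icc (n / 2 + 1) (n + 1),
        quotaWeight m n G q * ((if q = e then 1 else 0) / (m * (m - 1) : ℕ))) =
      if n < 2 * e then v e else 0 := by
    simp only [ite_div, zero_div, mul_ite, mul_zero, sum_ite_eq', mem_Icc]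
    refine if_congr (by omega) ?_ rfl
    rw [quotaWeight, if_neg (by omega), mul_one_div, mul_div_cancel_left₀ _ hpairs]
  simp only [add_div, mul_add, sum_add_distrib, hjump _ (show s + 1 ≤ n by omega),
    hjump _ (Nat.sub_le n s)]
  have hreflect : G (n - s) - G (n - s - 1) = G (s + 1) - G s := by
    linarith [hG s (n - s) (by omega), hG (s + 1) (n - s - 1) (by omega)]
  obtain hlt | heq | hgt := lt_trichotomy (s + 1) (n - s)
  · rw [if_neg (by omega), if_pos (by omega), zero_add]
    simp only [v, if_neg (show ¬2 * (n - s) = n + 1 by omega), div_one, hreflect]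
  · rw [if_pos (by omega), if_pos (by omega), ← heq]
    simp only [v, if_pos (show 2 * (s + 1) = n + 1 by omega), Nat.add_sub_cancel, add_halves]
  · rw [if_pos (by omega), if_neg (by omega), add_zero]
    simp only [v, if_neg (show ¬2 * (s + 1) = n + 1 by omega), div_one, Nat.add_sub_cancel]

theorem sum_quotaWeight_mul_quotaScore {G : ℕ → ℝ} {m n s : ℕ} (hm : 2 ≤ m)
    (hG : ∀ s t, s + t = n → G s + G t = G 0 + G n) (hs : s ≤ n) :
    ∑ q ∈ Icc (n / 2 + 1) (n + 1), quotaWeight m n G q * quotaScore m n q s = G s := by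
  have hpairs : ((m * (m - 1) : ℕ) : ℝ) ≠ 0 := by
    exact_mod_cast (Nat.mul_pos (by omega) (by omega)).ne'
  induction s with
  | zero =>
    rw [sum_eq_single_of_mem (n + 1) (by rw [mem_Icc]; omega) fun q hq hne ↦ ?_]
    · rw [quotaWeight, quotaScore, if_pos rfl, if_neg (by omega), if_pos (by omega)]
      field_simp
      ring
    · rw [mem_Icc] at hq
      rw [quotaScore, if_neg (by omega), if_neg (by omega), add_zero, zero_div, mul_zero]
  | succ s ih =>
    have hjump := sum_quotaWeight_mul_jump hm hG (show s < n by omega)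
    simp only [← quotaScore_succ_sub m (show s < n by omega), mul_sub, sum_sub_distrib,
      ih (by omega)] at hjump
    linarith

end Decomposition

section Totals

variable {V : Type*} [Fintype V] {m : ℕ}

theorem sum_pointVoting (F : ℕ → ℝ) (π : V → Ballot m) :
    ∑ j, pointVoting F π j = Fintype.card V * ∑ t ∈ range m, F t := by
  have hballot (i : V) : ∑ j, F (π i j) = ∑ t ∈ range m, F t := by
    rw [Equiv.sum_comp (π i) fun k : Fin m ↦ F k, Fin.sum_univ_eq_sum_range]
  simp only [pointVoting]
  rw [sum_comm, sum_congr rfl fun i _ ↦ hballot i, sum_const, card_univ, nsmul_eq_mul]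

theorem sum_supportingSize {G : ℕ → ℝ} {c : ℝ} (π : V → Ballot m)
    (hG : ∀ s t, s + t = Fintype.card V → G s + G t = c) :
    ∑ j, supportingSize G π j = (m * (m - 1) : ℕ) * (c / 2) := by
  have hswap : ∑ j, supportingSize G π j = ∑ j, ∑ k ∈ univ.erase j, G (supportCount π k j) := by
    simp only [supportingSize]
    exact sum_comm' (by simp [eq_comm])
  have hpair (j : Fin m) : ∑ k ∈ univ.erase j, (G (supportCount π j k) + G (supportCount π k j)) =
      (m - 1 : ℕ) * c := by
    rw [sum_congr rfl fun k hk ↦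
      hG _ _ (supportCount_add_supportCount π (ne_of_mem_erase hk).symm), sum_const,
      card_erase_of_mem (mem_univ j), card_univ, Fintype.card_fin, nsmul_eq_mul]
  have hdouble : 2 * ∑ j, supportingSize G π j = (m * (m - 1) : ℕ) * c := by
    rw [two_mul]
    nth_rw 2 [hswap]
    simp only [supportingSize, ← sum_add_distrib, hpair, sum_const, card_univ, Fintype.card_fin,
      nsmul_eq_mul, Nat.cast_mul, mul_assoc]
  linarith

theorem sum_pointVoting_topScore [Nonempty V] {q : ℕ} (hq : q ∈ Icc 1 m) (π : V → Ballot m) :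
    ∑ j, pointVoting (topScore (Fintype.card V) q) π j = 1 := by
  rw [mem_Icc] at hq
  have hfilter : {t ∈ range m | t < q} = range q := by
    ext t
    simp only [mem_filter, mem_range]
    omega
  have hV : (Fintype.card V : ℝ) ≠ 0 := by exact_mod_cast Fintype.card_ne_zero
  have hq₀ : (q : ℝ) ≠ 0 := by exact_mod_cast (show q ≠ 0 by omega)
  simp only [sum_pointVoting, topScore, ← sum_div, ← sum_filter, hfilter, sum_const, card_range,
    nsmul_eq_mul]
  rw [mul_inv_cancel₀ hq₀, mul_one_div_cancel hV]

theorem sum_supportingSize_quotaScore (hm : 2 ≤ m) (q : ℕ) (π : V → Ballot m) :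
    ∑ j, supportingSize (quotaScore m (Fintype.card V) q) π j = 1 := by
  have hpairs : ((m * (m - 1) : ℕ) : ℝ) ≠ 0 := by
    exact_mod_cast (Nat.mul_pos (by omega) (by omega)).ne'
  rw [sum_supportingSize (c := 2 / (m * (m - 1) : ℕ)) π fun s t hst ↦ ?_]
  · field_simp
  · rw [quotaScore, quotaScore, ← add_div]
    congr 1
    split_ifs <;> first | omega | norm_num

theorem pointVoting_eq_sum {ι : Type*} {T : Finset ι} {w : ι → ℝ} {f : ι → ℕ → ℝ} {F : ℕ → ℝ}
    (h : ∀ t < m, ∑ q ∈ T, w q * f q t = F t) (π : V → Ballot m) (j : Fin m) :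
    pointVoting F π j = ∑ q ∈ T, w q * pointVoting (f q) π j := by
  simp only [pointVoting, mul_sum]
  rw [sum_comm]
  exact sum_congr rfl fun i _ ↦ (h _ (π i j).isLt).symm

theorem supportingSize_eq_sum {ι : Type*} {T : Finset ι} {w : ι → ℝ} {g : ι → ℕ → ℝ} {G : ℕ → ℝ}
    (h : ∀ s ≤ Fintype.card V, ∑ q ∈ T, w q * g q s = G s) (π : V → Ballot m) (j : Fin m) :
    supportingSize G π j = ∑ q ∈ T, w q * supportingSize (g q) π j := by
  simp only [supportingSize, mul_sum]
  rw [sum_comm]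
  exact sum_congr rfl fun k _ ↦ (h _ (card_le_univ _)).symm

end Totals

theorem SwapMonotone.exists_eq_sum_add_sum {V : Type*} [Fintype V] [DecidableEq V] [Nonempty V]
    {m : ℕ} (hm : 2 ≤ m) {p : (V → Ballot m) → Fin m → ℝ} (hp : SwapMonotone p)
    (hN : BallotNeutral p) (hA : BallotAnonymous p) (hdist : ∀ π, IsDist (p π)) :
    ∃ w₁ w₂ : ℕ → ℝ, (∀ q, 0 ≤ w₁ q) ∧ (∀ q, 0 ≤ w₂ q) ∧
      ∑ q ∈ Icc 1 m, w₁ q +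
        ∑ q ∈ Icc (Fintype.card V / 2 + 1) (Fintype.card V + 1), w₂ q = 1 ∧
      ∀ π j, p π j = ∑ q ∈ Icc 1 m, w₁ q * pointVoting (topScore (Fintype.card V) q) π j +
        ∑ q ∈ Icc (Fintype.card V / 2 + 1) (Fintype.card V + 1),
          w₂ q * supportingSize (quotaScore m (Fintype.card V) q) π j := by
  obtain ⟨F, G, hF, hF₀, hG, hG₀, hGsymm, hFG⟩ :=
    hp.exists_eq_pointVoting_add_supportingSize hm hN hA fun π ↦ (hdist π).1
  set n := Fintype.card V
  have hdecomp (π : V → Ballot m) (j : Fin m) : p π j =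
      ∑ q ∈ Icc 1 m, topWeight n F q * pointVoting (topScore n q) π j +
        ∑ q ∈ Icc (n / 2 + 1) (n + 1),
          quotaWeight m n G q * supportingSize (quotaScore m n q) π j := by
    rw [hFG, Pi.add_apply, Pi.add_apply]
    congr 1
    · exact pointVoting_eq_sum (fun t ht ↦
        sum_topWeight_mul_topScore Fintype.card_ne_zero (hF₀ m (by omega)) ht.le) π j
    · exact supportingSize_eq_sum (fun s hs ↦ sum_quotaWeight_mul_quotaScore hm hGsymm hs) π j
  refine ⟨topWeight n F, quotaWeight m n G, topWeight_nonneg hF n, quotaWeight_nonneg hG hG₀ m n,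
    ?_, hdecomp⟩
  rw [← (hdist 1).2]
  simp only [hdecomp, sum_add_distrib]
  rw [sum_comm, sum_comm (s := univ)]
  simp only [← mul_sum]
  congr 1
  · exact sum_congr rfl fun q hq ↦ by rw [sum_pointVoting_topScore hq, mul_one]
  · exact sum_congr rfl fun q _ ↦ by rw [sum_supportingSize_quotaScore hm, mul_one]

section Representation

variable {m : ℕ}

/-- The ballot of a voter with the tie-free utility function `v`. -/
def Represents (ρ : Ballot m) (v : Fin m → ℝ) : Prop :=
  ∀ j k, v j < v k ↔ ρ k < ρ j

theorem exists_represents {v : Fin m → ℝ} (hv : Function.Injective v) :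
    ∃ ρ, Represents ρ v := by
  let σ := Tuple.sort fun j ↦ -v j
  have hσ : StrictMono ((fun j ↦ -v j) ∘ σ) :=
    (Tuple.monotone_sort _).strictMono_of_injective ((neg_injective.comp hv).comp σ.injective)
  refine ⟨σ⁻¹, fun j k ↦ ?_⟩
  rw [← hσ.lt_iff_lt]
  simp

theorem Represents.injective {ρ : Ballot m} {v : Fin m → ℝ} (h : Represents ρ v) :
    Function.Injective v := fun j k hjk ↦
  ρ.injective <| le_antisymm (not_lt.1 fun hlt ↦ ((h j k).2 hlt).ne hjk)
    (not_lt.1 fun hlt ↦ ((h k j).2 hlt).ne' hjk)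

theorem Represents.rnk_eq {ρ : Ballot m} {v : Fin m → ℝ} (h : Represents ρ v) (j : Fin m) :
    rnk v j = ρ j + 1 := by
  have hmem (k : Fin m) : v j < v k ∨ (v k = v j ∧ k ≤ j) ↔ ρ k ≤ ρ j := by
    rw [h, h.injective.eq_iff, le_iff_lt_or_eq (a := ρ k), ρ.injective.eq_iff]
    exact or_congr_right ⟨And.left, fun hkj ↦ ⟨hkj, hkj.le⟩⟩
  have himage : ({k | ρ k ≤ ρ j} : Finset (Fin m)).map ρ.toEmbedding = Iic (ρ j) := by
    ext k
    simp
  rw [rnk, filter_congr fun k _ ↦ hmem k, ← card_map ρ.toEmbedding, himage, Fin.card_Iic]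

theorem Represents.prefers_iff {ρ : Ballot m} {v : Fin m → ℝ} (h : Represents ρ v)
    {j k : Fin m} (hjk : j ≠ k) : Prefers v j k ↔ ρ j < ρ k := by
  rw [Prefers, h, h.injective.eq_iff, or_iff_left fun h ↦ hjk h.1]

theorem Jone_eq_pointVoting {n : ℕ} {u : Fin n → Fin m → ℝ} {π : Fin n → Ballot m}
    (h : ∀ i, Represents (π i) (u i)) (q : ℕ) : Jone q u = pointVoting (topScore n q) π := by
  funext j
  simp only [Jone, pointVoting, topScore, (h _).rnk_eq, Nat.add_one_le_iff, sum_div]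

theorem sum_sum_ite_eq_two_mul_sum_erase {α : Type*} [Fintype α] [DecidableEq α]
    (f : α → α → ℝ) (j : α) :
    ∑ x, ∑ y, (if x = y then 0 else (if j = x then f x y else 0) + (if j = y then f y x else 0)) =
      2 * ∑ k ∈ univ.erase j, f j k := by
  have hsplit (x y : α) :
      (if x = y then 0 else (if j = x then f x y else 0) + (if j = y then f y x else 0)) =
        (if j = x then if j ≠ y then f j y else 0 else 0) +
          (if j = y then if j ≠ x then f j x else 0 else 0) := by
    grind
  simp only [hsplit, sum_add_distrib]
  rw [sum_comm (f := fun x y ↦ if j = y then if j ≠ x then f j x else 0 else 0), ← two_mul,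
    Fintype.sum_eq_single j fun x hx ↦ by simp [hx.symm]]
  simp only [if_true, ← sum_filter, filter_ne]

theorem Jtwo_eq_supportingSize {n : ℕ} {u : Fin n → Fin m → ℝ} {π : Fin n → Ballot m}
    (h : ∀ i, Represents (π i) (u i)) {q : ℕ} (hq : n < 2 * q) :
    Jtwo q u = supportingSize (quotaScore m n q) π := by
  funext j
  let duel (s : ℕ) : ℝ := ((if q ≤ s then 1 else 0) + (if n < q + s then 1 else 0)) / 2
  have hduel (x y : Fin m) (hxy : x ≠ y) :
      (if q ≤ #{i | Prefers (u i) x y} then (if j = x then (1 : ℝ) else 0)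
        else if q ≤ n - #{i | Prefers (u i) x y} then (if j = y then (1 : ℝ) else 0)
        else (if j = x then (1 : ℝ) / 2 else 0) + (if j = y then (1 : ℝ) / 2 else 0)) =
      (if j = x then duel (supportCount π x y) else 0) +
        (if j = y then duel (supportCount π y x) else 0) := by
    have hcount : #{i | Prefers (u i) x y} = supportCount π x y :=
      congrArg card (filter_congr fun i _ ↦ (h i).prefers_iff hxy)
    have htotal := supportCount_add_supportCount π hxy
    rw [Fintype.card_fin] at htotal
    simp only [hcount, duel]
    split_ifs <;> first | omega | norm_num
  rw [Jtwo, sum_congr rfl fun x _ ↦ sum_congr rfl fun y _ ↦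
      ite_congr rfl (fun _ ↦ rfl) (hduel x y),
    sum_sum_ite_eq_two_mul_sum_erase (fun x y ↦ duel (supportCount π x y)) j]
  simp only [duel, supportingSize, quotaScore, ← sum_div]
  rw [mul_div_cancel₀ _ two_ne_zero]

end Representation

section Scores

variable {m : ℕ}

theorem isPrefU_comp_ballot {s : ℕ → ℝ} (hs : StrictAnti s) (hm : 0 < m) (hfirst : s 0 = 1)
    (hlast : s (m - 1) = 0) (ρ : Ballot m) : IsPrefU fun j ↦ s (ρ j) := by
  refine ⟨⟨fun j ↦ ⟨?_, ?_⟩, ⟨ρ⁻¹ ⟨m - 1, by omega⟩, ?_⟩, ⟨ρ⁻¹ ⟨0, hm⟩, ?_⟩⟩,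
    hs.injective.comp (Fin.val_injective.comp ρ.injective)⟩
  · rw [← hlast]
    exact hs.antitone (by omega)
  · rw [← hfirst]
    exact hs.antitone (Nat.zero_le _)
  · simpa
  · simpa

theorem represents_comp_ballot {s : ℕ → ℝ} (hs : StrictAnti s) (ρ : Ballot m) :
    Represents ρ fun j ↦ s (ρ j) :=
  fun _ _ ↦ hs.lt_iff_gt

/-- The normalized Borda scores of `m` candidates, used as the standard utilities of a ballot. -/
noncomputable def bordaScore (m r : ℕ) : ℝ :=
  1 - r / (m - 1 : ℕ)

theorem strictAnti_bordaScore (hm : 2 ≤ m) : StrictAnti (bordaScore m) := fun r s hrs ↦ by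
  have hden : (0 : ℝ) < (m - 1 : ℕ) := by exact_mod_cast (show 0 < m - 1 by omega)
  rw [bordaScore, bordaScore]
  gcongr

theorem bordaScore_zero (m : ℕ) : bordaScore m 0 = 1 := by
  simp [bordaScore]

theorem bordaScore_last (hm : 2 ≤ m) : bordaScore m (m - 1) = 0 := by
  rw [bordaScore, div_self, sub_self]
  exact_mod_cast (show m - 1 ≠ 0 by omega)

/-- Borda scores tilted towards the scores that only distinguish the first `t` positions from the
others; these are approached as `ε` tends to `0`. -/
noncomputable def tiltedScore (m t : ℕ) (ε : ℝ) (r : ℕ) : ℝ :=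
  (1 - ε) * (if r < t then 1 else 0) + ε * bordaScore m r

theorem strictAnti_tiltedScore (hm : 2 ≤ m) (t : ℕ) {ε : ℝ} (hε : ε ∈ Set.Ioc 0 1) :
    StrictAnti (tiltedScore m t ε) := by
  have hstep : Antitone fun r ↦ if r < t then (1 : ℝ) else 0 := fun r s hrs ↦ by
    dsimp only
    split_ifs <;> first | omega | norm_num
  exact (hstep.const_mul (sub_nonneg.2 hε.2)).add_strictAnti
    ((strictAnti_bordaScore hm).const_mul hε.1)

theorem isPrefU_bordaScore (hm : 2 ≤ m) (ρ : Ballot m) : IsPrefU fun j ↦ bordaScore m (ρ j) :=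
  isPrefU_comp_ballot (strictAnti_bordaScore hm) (by omega) (bordaScore_zero m)
    (bordaScore_last hm) ρ

theorem isPrefU_tiltedScore (hm : 2 ≤ m) {t : ℕ} (ht : t ∈ Set.Ioo 0 m) {ε : ℝ}
    (hε : ε ∈ Set.Ioc 0 1) (ρ : Ballot m) : IsPrefU fun j ↦ tiltedScore m t ε (ρ j) := by
  refine isPrefU_comp_ballot (strictAnti_tiltedScore hm t hε) (by omega) ?_ ?_ ρ
  · rw [tiltedScore, if_pos ht.1, bordaScore_zero]
    ring
  · rw [tiltedScore, if_neg (by have := ht.2; omega), bordaScore_last hm]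
    ring

end Scores

section Dominance

variable {V : Type*} {m : ℕ}

/-- The probability that `P` chooses one of the first `t` candidates of the ballot `ρ`. -/
def topMass (P : Fin m → ℝ) (ρ : Ballot m) (t : ℕ) : ℝ :=
  ∑ j with (ρ j : ℕ) < t, P j

theorem topMass_succ (P : Fin m → ℝ) (ρ : Ballot m) (j : Fin m) :
    topMass P ρ (ρ j + 1) = topMass P ρ (ρ j) + P j := by
  have hinsert : ({k | (ρ k : ℕ) < ρ j + 1} : Finset (Fin m)) =
      insert j ({k | (ρ k : ℕ) < ρ j} : Finset (Fin m)) := by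
    ext k
    simp [le_iff_eq_or_lt (a := ρ k)]
  rw [topMass, hinsert, sum_insert (by simp), add_comm, topMass]

theorem topMass_mul_swap (P : Fin m → ℝ) {ρ : Ballot m} {x y : Fin m}
    (hxy : (ρ x : ℕ) + 1 = ρ y) {t : ℕ} (ht : t ≠ ρ y) :
    topMass P (ρ * Equiv.swap x y) t = topMass P ρ t := by
  refine sum_congr (filter_congr fun k _ ↦ ?_) fun _ _ ↦ rfl
  rw [Equiv.Perm.mul_apply, Equiv.swap_apply_def]
  split_ifs <;> grind

theorem sum_mul_tiltedScore (P : Fin m → ℝ) (ρ : Ballot m) (t : ℕ) (ε : ℝ) :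
    ∑ j, P j * tiltedScore m t ε (ρ j) =
      (1 - ε) * topMass P ρ t + ε * ∑ j, P j * bordaScore m (ρ j) := by
  rw [topMass, sum_filter, mul_sum, mul_sum, ← sum_add_distrib]
  refine sum_congr rfl fun j _ ↦ ?_
  rw [tiltedScore]
  split_ifs <;> ring

theorem topMass_le_of_sum_mul_tiltedScore_le {P Q : Fin m → ℝ} {ρ : Ballot m} {t : ℕ}
    (h : ∀ ε ∈ Set.Ioc (0 : ℝ) 1,
      ∑ j, Q j * tiltedScore m t ε (ρ j) ≤ ∑ j, P j * tiltedScore m t ε (ρ j)) :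
    topMass Q ρ t ≤ topMass P ρ t := by
  simp only [sum_mul_tiltedScore] at h
  have hclosed : IsClosed {ε : ℝ |
      (1 - ε) * topMass Q ρ t + ε * ∑ j, Q j * bordaScore m (ρ j) ≤
        (1 - ε) * topMass P ρ t + ε * ∑ j, P j * bordaScore m (ρ j)} :=
    isClosed_le (by fun_prop) (by fun_prop)
  have hzero : (0 : ℝ) ∈ closure (Set.Ioc 0 1) := by simp [closure_Ioc]
  simpa using hclosed.closure_subset_iff.2 h hzero

theorem swapMonotone_of_topMass_update_le [DecidableEq V] {p : (V → Ballot m) → Fin m → ℝ}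
    (hp : ∀ π i ρ t, topMass (p (Function.update π i ρ)) (π i) t ≤ topMass (p π) (π i) t) :
    SwapMonotone p := by
  have hle (π : V → Ballot m) (i : V) (x y : Fin m) (t : ℕ) :
      topMass (p (swapAt π i x y)) (π i) t ≤ topMass (p π) (π i) t := hp π i _ t
  have heq {π : V → Ballot m} {i : V} {x y : Fin m} (hxy : (π i x : ℕ) + 1 = π i y) {t : ℕ}
      (ht : t ≠ π i y) : topMass (p (swapAt π i x y)) (π i) t = topMass (p π) (π i) t := by
    refine (hle π i x y t).antisymm ?_
    simpa only [swapAt_swapAt, swapAt_apply_self, topMass_mul_swap _ hxy ht] using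
      hle (swapAt π i x y) i x y t
  refine ⟨fun {π i x y z} hxy hzx hzy ↦ ?_, fun {π i x y} hxy ↦ ?_, fun {π i x y} hxy ↦ ?_⟩
  · have hz : (π i z : ℕ) ≠ π i x ∧ (π i z : ℕ) ≠ π i y := by simp [← Fin.ext_iff, hzx, hzy]
    have hbefore := heq hxy hz.2
    have hafter := heq hxy (t := π i z + 1) (by omega)
    rw [topMass_succ, topMass_succ, hbefore] at hafter
    exact add_left_cancel hafter
  · have hbefore := heq hxy (t := π i x) (by omega)
    have hafter := heq hxy (t := π i y + 1) (by omega)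
    rw [topMass_succ, topMass_succ, ← hxy, topMass_succ, topMass_succ, hbefore] at hafter
    linarith
  · have hbefore := heq hxy (t := π i x) (by omega)
    have hafter := hle π i x y (π i x + 1)
    rw [topMass_succ, topMass_succ, hbefore] at hafter
    linarith

end Dominance

section Restriction

variable {n m : ℕ} {J : (Fin n → Fin m → ℝ) → Fin m → ℝ}

/-- The restriction of a mechanism to the profiles of Borda utilities, as a mechanism on ballots. -/
noncomputable def onBallots (J : (Fin n → Fin m → ℝ) → Fin m → ℝ) (π : Fin n → Ballot m) :
    Fin m → ℝ :=
  J fun i j ↦ bordaScore m (π i j)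

theorem isDist_onBallots (hm : 2 ≤ m) (hJ : MechU J) (π : Fin n → Ballot m) :
    IsDist (onBallots J π) :=
  hJ _ fun i ↦ isPrefU_bordaScore hm (π i)

theorem eq_onBallots (hm : 2 ≤ m) (hOrd : OrdinalMech J) {u : Fin n → Fin m → ℝ}
    {π : Fin n → Ballot m} (hu : IsProfileU u) (h : ∀ i, Represents (π i) (u i)) :
    J u = onBallots J π :=
  hOrd _ _ hu (fun i ↦ isPrefU_bordaScore hm (π i)) fun i j k ↦
    (h i j k).trans (represents_comp_ballot (strictAnti_bordaScore hm) (π i) j k).symm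

theorem ballotNeutral_onBallots (hm : 2 ≤ m) (hN : Neutral J) : BallotNeutral (onBallots J) :=
  fun τ π j ↦ hN τ _ (fun i ↦ isPrefU_bordaScore hm (π i)) j

theorem ballotAnonymous_onBallots (hm : 2 ≤ m) (hA : AnonymousMech J) :
    BallotAnonymous (onBallots J) :=
  fun σ π ↦ hA σ _ fun i ↦ isPrefU_bordaScore hm (π i)

theorem sum_onBallots_update_mul_le (hm : 2 ≤ m) (hOrd : OrdinalMech J) (hT : Truthful J)
    (π : Fin n → Ballot m) (i : Fin n) (ρ : Ballot m) {v : Fin m → ℝ} (hv : IsPrefU v)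
    (hrep : Represents (π i) v) :
    ∑ j, onBallots J (Function.update π i ρ) j * v j ≤ ∑ j, onBallots J π j * v j := by
  let u := Function.update (fun l j ↦ bordaScore m (π l j)) i v
  have hu : IsProfileU u := (Function.forall_update_iff _ fun _ ↦ IsPrefU).2
    ⟨hv, fun l _ ↦ isPrefU_bordaScore hm (π l)⟩
  have hrep_u : ∀ l, Represents (π l) (u l) := (Function.forall_update_iff _ fun l ↦
    Represents (π l)).2 ⟨hrep, fun l _ ↦ represents_comp_ballot (strictAnti_bordaScore hm) (π l)⟩
  have hdeviate : J (Function.update u i fun j ↦ bordaScore m (ρ j)) =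
      onBallots J (Function.update π i ρ) := by
    rw [onBallots, Function.update_idem]
    congr 1
    funext l
    obtain rfl | hl := eq_or_ne l i
    · simp only [Function.update_self]
    · simp only [Function.update_of_ne hl]
  simpa only [hdeviate, eq_onBallots hm hOrd hu hrep_u, u, Function.update_self] using
    hT u hu i _ (isPrefU_bordaScore hm ρ)

theorem topMass_onBallots_update_le (hm : 2 ≤ m) (hJ : MechU J) (hOrd : OrdinalMech J)
    (hT : Truthful J) (π : Fin n → Ballot m) (i : Fin n) (ρ : Ballot m) (t : ℕ) :
    topMass (onBallots J (Function.update π i ρ)) (π i) t ≤ topMass (onBallots J π) (π i) t := by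
  obtain rfl | ht₀ := Nat.eq_zero_or_pos t
  · simp [topMass]
  obtain htm | hmt := lt_or_ge t m
  · exact topMass_le_of_sum_mul_tiltedScore_le fun ε hε ↦
      sum_onBallots_update_mul_le hm hOrd hT π i ρ (isPrefU_tiltedScore hm ⟨ht₀, htm⟩ hε (π i))
        (represents_comp_ballot (strictAnti_tiltedScore hm t hε) (π i))
  · have hall (j : Fin m) : (π i j : ℕ) < t := by omega
    simp only [topMass, hall, filter_true, (isDist_onBallots hm hJ _).2, le_refl]

theorem swapMonotone_onBallots (hm : 2 ≤ m) (hJ : MechU J) (hOrd : OrdinalMech J)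
    (hT : Truthful J) : SwapMonotone (onBallots J) :=
  swapMonotone_of_topMass_update_le (topMass_onBallots_update_le hm hJ hOrd hT)

end Restriction

/-- every ordinal, neutral, anonymous and truthful mechanism on
tie-free profiles is a convex combination of the mechanisms `J^{1,q}_U`
(`q ∈ {1,…,m}`) together with the `J^{2,q}_U` (`q ∈ {⌊n/2⌋+1,…,n+1}`). -/
theorem stmt5 (n m : ℕ) (hn : 1 ≤ n) (hm : 2 ≤ m)
    (J : (Fin n → Fin m → ℝ) → Fin m → ℝ)
    (hJ : MechU J) (hOrd : OrdinalMech J) (hN : Neutral J)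
    (hA : AnonymousMech J) (hT : Truthful J) :
    ∃ w₁ w₂ : ℕ → ℝ, (∀ q, 0 ≤ w₁ q) ∧ (∀ q, 0 ≤ w₂ q) ∧
      ((∑ q ∈ Finset.Icc 1 m, w₁ q) +
        (∑ q ∈ Finset.Icc (n/2 + 1) (n + 1), w₂ q) = 1) ∧
      ∀ u, IsProfileU u → ∀ j,
        J u j = (∑ q ∈ Finset.Icc 1 m, w₁ q * Jone q u j) +
          (∑ q ∈ Finset.Icc (n/2 + 1) (n + 1), w₂ q * Jtwo q u j) := by
  have : Nonempty (Fin n) := ⟨⟨0, hn⟩⟩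
  obtain ⟨w₁, w₂, hw₁, hw₂, hw, hconv⟩ :=
    (swapMonotone_onBallots hm hJ hOrd hT).exists_eq_sum_add_sum hm
      (ballotNeutral_onBallots hm hN) (ballotAnonymous_onBallots hm hA) (isDist_onBallots hm hJ)
  rw [Fintype.card_fin] at hw hconv
  refine ⟨w₁, w₂, hw₁, hw₂, hw, fun u hu j ↦ ?_⟩
  choose π hπ using fun i ↦ exists_represents (hu i).2
  rw [eq_onBallots hm hOrd hu hπ, hconv]
  simp only [Jone_eq_pointVoting hπ]
  congr 1
  exact sum_congr rfl fun q hq ↦ by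
    rw [Jtwo_eq_supportingSize hπ (by rw [mem_Icc] at hq; omega)]
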